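/- arXiv:0904.4429 — 2 statements merged into one kernel-verified Lean document; each statement's English description precedes it below -/
import Mathlib

section
/- Let R and B be disjoint finite sets of points in the plane with |R| = |B| = n ≥ 1, and suppose S = R ∪ B is in general position. Then S determines at least n balanced lines, where a balanced line is a line through one point of B and one point of R such that each of the two open half-planes it bounds contains equally many points of B and of R. -/
/-!
The proof rotates a sweep line through a half turn and follows the order in which it meets the
points. Read an order of the `2n` points as a lattice path, a blue point being a step up and a red
point a step down. Each event of the rotation transposes two adjacent points, namely the two points
on the line of `S` to which the sweep line is parallel, and after the half turn the order is
reversed.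

For `1 ≤ j ≤ n` let `σ j` say whether the path is positive after `2j - 1` steps; put
`σ 0` true and `σ (n + 1)` false. A transposition changes at most one `σ j`, and it does so exactly
when the two points have different colours and the path is at height `0` just before them, so that
the line is balanced (`IsSweep.balanced`). Between consecutive
values, `σ` has down crossings `z` (`σ z` true, `σ (z + 1)` false) and, in the other direction, up
crossings; at each of them the path is at height `0` after `2z` steps. A down crossing
is labelled by the set of *blue* points among the first `2z`, an up crossing by the set of *red*
ones. A transposition changing no `σ j` leaves all labels intact: at a down crossing the
only transposition across place `2z` is of two red points, at an up crossing of two blue ones.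

Drawn in the plane (time, `z`), the crossings trace curves that bound the region where `σ` holds.
Orient down crossings forwards and up crossings backwards in time. The curves then match
{down crossings at the start, up crossings now} with {down crossings now, up crossings at the
start}, and the distance between the labels at the two ends of a curve is bounded by the number of
balanced lines met along it. This is the predicate `Matched`, preserved by `Matched.swap`.

After the half turn the picture is reflected: crossing `z` becomes `n - z` and each label is
complemented within its colour class. Gluing the two ends of the strip removes, one at a time,
the curves that join a down crossing to an up crossing (`card_le_of_glued`), until only curves
joining crossings of the same kind are left. There is one more down crossing than up crossings, so
one of these two numbers is odd; for that kind, each point of the relevant colour lies in an odd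
number of the labels at one time or in an odd number of the complements, but not in both, hence it
lies in the symmetric difference of the labels at the ends of some curve
(`card_le_of_matching`). As there are `n` such points, at least `n` balanced lines occur. Each line
is met once in a half turn.
-/

open scoped Classical

/-- Orientation determinant of the points `q - p` and `x - p`:
positive iff `x` lies in the open half-plane to the left of the directed
line from `p` to `q`, negative iff to the right, zero iff collinear. -/
def cross (p q x : ℝ × ℝ) : ℝ :=
  (q.1 - p.1) * (x.2 - p.2) - (q.2 - p.2) * (x.1 - p.1)

/-- A finite point set is in general position if no three (distinct) of its
points are collinear. -/
def GenPos (S : Finset (ℝ × ℝ)) : Prop :=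
  ∀ p ∈ S, ∀ q ∈ S, ∀ x ∈ S, p ≠ q → p ≠ x → q ≠ x → cross p q x ≠ 0

/-- Weight (number of blue minus number of red points) of the open half-plane
`{x | cross p q x > 0}` bounded by the line through `p` and `q`. -/
noncomputable def wPos (B R : Finset (ℝ × ℝ)) (p q : ℝ × ℝ) : ℤ :=
  ((B.filter (fun x => 0 < cross p q x)).card : ℤ) -
    ((R.filter (fun x => 0 < cross p q x)).card : ℤ)

/-- Weight of the other open half-plane `{x | cross p q x < 0}`. -/
noncomputable def wNeg (B R : Finset (ℝ × ℝ)) (p q : ℝ × ℝ) : ℤ :=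
  ((B.filter (fun x => cross p q x < 0)).card : ℤ) -
    ((R.filter (fun x => cross p q x < 0)).card : ℤ)

/-- The line through `p` and `q` is balanced: both open half-planes it bounds
have weight `δ`. -/
def BalancedLine (B R : Finset (ℝ × ℝ)) (δ : ℤ) (p q : ℝ × ℝ) : Prop :=
  wPos B R p q = δ ∧ wNeg B R p q = δ

/-- The balanced lines determined by `S = R ∪ B`, represented by the
(blue, red) pair of points of `S` spanning them.  In general position every
line contains at most two points of `S`, so these pairs are in bijection with
the balanced lines. -/
noncomputable def balancedPairs (B R : Finset (ℝ × ℝ)) (δ : ℤ) :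
    Finset ((ℝ × ℝ) × (ℝ × ℝ)) :=
  (B ×ˢ R).filter (fun pq => BalancedLine B R δ pq.1 pq.2)

/-! ### Matchings of labelled crossings -/

section Matching

set_option linter.unusedSectionVars false

variable {α : Type*} [DecidableEq α]

/-- Distance between labelled crossings, where the Boolean is `true` for a down crossing and `false`
for an up crossing. Labels of the same kind are compared as sets; a set of blue points and a set
of red points can be compared only through their sizes. -/
noncomputable def nodeDist (x y : Bool × Finset α) : ℕ :=
  if x.1 = y.1 then (symmDiff x.2 y.2).card
  else (x.2.card - y.2.card) + (y.2.card - x.2.card)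

/-- The crossings at the start (down: `D₀`, up: `U₀`) and now (down: `D`, up: `U`) can be matched
along oriented arcs of total length at most `k`. Down crossings are traversed forwards in time and
up crossings backwards, so arcs begin in `D₀` or `U` and end in `D` or `U₀`. -/
def Matched (D₀ U₀ D U : Multiset (Finset α)) (k : ℕ) : Prop :=
  ∃ A : Multiset ((Bool × Finset α) × (Bool × Finset α)),
    A.map Prod.fst = D₀.map (Prod.mk true) + U.map (Prod.mk false) ∧
    A.map Prod.snd = D.map (Prod.mk true) + U₀.map (Prod.mk false) ∧
    (A.map (fun a => nodeDist a.1 a.2)).sum ≤ k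

lemma card_symmDiff_triangle (a b c : Finset α) :
    (symmDiff a c).card ≤ (symmDiff a b).card + (symmDiff b c).card :=
  (Finset.card_le_card (symmDiff_triangle a b c)).trans (Finset.card_union_le _ _)

lemma card_le_add_symmDiff (a b : Finset α) : a.card ≤ b.card + (symmDiff a b).card := by
  refine (Finset.card_le_card ?_).trans (Finset.card_union_le _ _)
  intro x hx
  by_cases h : x ∈ b <;> simp [Finset.mem_symmDiff, hx, h]

lemma card_symmDiff_of_comparable {a b : Finset α} (h : a ⊆ b ∨ b ⊆ a) :
    (symmDiff a b).card = (a.card - b.card) + (b.card - a.card) := by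
  rcases h with h | h
  · have := Finset.card_le_card h
    rw [symmDiff_of_le h, Finset.card_sdiff_of_subset h]; omega
  · have := Finset.card_le_card h
    rw [symmDiff_of_ge h, Finset.card_sdiff_of_subset h]; omega

lemma nodeDist_ge_card (x y : Bool × Finset α) :
    (x.2.card - y.2.card) + (y.2.card - x.2.card) ≤ nodeDist x y := by
  unfold nodeDist
  split_ifs
  · have h1 := card_le_add_symmDiff x.2 y.2
    have h2 := card_le_add_symmDiff y.2 x.2
    rw [symmDiff_comm] at h2
    omega
  · exact le_rfl

lemma Matched.mono {D₀ U₀ D U : Multiset (Finset α)} {k l : ℕ} (h : Matched D₀ U₀ D U k)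
    (hkl : k ≤ l) : Matched D₀ U₀ D U l := by
  obtain ⟨A, h1, h2, h3⟩ := h
  exact ⟨A, h1, h2, h3.trans hkl⟩

lemma Matched.refl (D U : Multiset (Finset α)) : Matched D U D U 0 := by
  refine ⟨D.map (fun d => ((true, d), (true, d))) + U.map (fun u => ((false, u), (false, u))),
    ?_, ?_, ?_⟩ <;> simp [Function.comp_def, nodeDist]

/-- A new adjacent pair of crossings appears; they are the two ends of a new arc. -/
lemma Matched.create {D₀ U₀ D U : Multiset (Finset α)} {k : ℕ} (h : Matched D₀ U₀ D U k)
    {d u : Finset α} :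
    Matched D₀ U₀ (d ::ₘ D) (u ::ₘ U) (k + ((d.card - u.card) + (u.card - d.card))) := by
  obtain ⟨A, h1, h2, h3⟩ := h
  refine ⟨((false, u), (true, d)) ::ₘ A, ?_, ?_, ?_⟩
  · simp [h1]
  · simp [h2]
  · have : nodeDist (false, u) (true, d) = (u.card - d.card) + (d.card - u.card) := by
      simp [nodeDist]
    simp only [Multiset.map_cons, Multiset.sum_cons]
    omega

/-- A down crossing `d` and an up crossing `u` meet and disappear; the arc ending at `d` is joined
to the arc beginning at `u`. Since `d` and `u` are only compared by size, the joined arc could be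
too long if it has both ends of the same kind; this is prevented by `d` (resp. `u`) being comparable
with the other current labels of its kind, for which size differences are distances. -/
lemma Matched.annihilate {D₀ U₀ D U : Multiset (Finset α)} {k : ℕ} {d u : Finset α}
    (h : Matched D₀ U₀ (d ::ₘ D) (u ::ₘ U) k)
    (hD : ∀ y ∈ D, d ⊆ y ∨ y ⊆ d) (hU : ∀ x ∈ U, x ⊆ u ∨ u ⊆ x) :
    Matched D₀ U₀ D U (k + ((d.card - u.card) + (u.card - d.card))) := by
  obtain ⟨A, h1, h2, h3⟩ := h
  have hd : (true, d) ∈ A.map Prod.snd := by rw [h2]; simp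
  obtain ⟨⟨x, d'⟩, ha, rfl⟩ := Multiset.mem_map.1 hd
  obtain ⟨A₁, rfl⟩ := Multiset.exists_cons_of_mem ha
  simp only [Multiset.map_cons, Multiset.cons_add, Multiset.cons_inj_right, Multiset.sum_cons,
    Multiset.add_cons] at h1 h2 h3
  by_cases hx : x = (false, u)
  · subst hx
    rw [Multiset.cons_inj_right] at h1
    exact ⟨A₁, h1, h2, by omega⟩
  have hu : (false, u) ∈ A₁.map Prod.fst := by
    have : (false, u) ∈ x ::ₘ A₁.map Prod.fst := by rw [h1]; simp
    rcases Multiset.mem_cons.1 this with h | h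
    · exact absurd h.symm hx
    · exact h
  obtain ⟨⟨u', y⟩, hb, rfl⟩ := Multiset.mem_map.1 hu
  obtain ⟨A₂, rfl⟩ := Multiset.exists_cons_of_mem hb
  simp only [Multiset.map_cons, Multiset.sum_cons] at h1 h2 h3
  rw [Multiset.cons_swap, Multiset.cons_inj_right] at h1
  refine ⟨(x, y) ::ₘ A₂, by simpa using h1, by simpa using h2, ?_⟩
  have hxm : x ∈ D₀.map (Prod.mk true) + U.map (Prod.mk false) := by rw [← h1]; simp
  have hym : y ∈ D.map (Prod.mk true) + U₀.map (Prod.mk false) := by rw [← h2]; simp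
  have key : nodeDist x y ≤ nodeDist x (true, d) + ((d.card - u.card) + (u.card - d.card))
      + nodeDist (false, u) y := by
    have e1 := nodeDist_ge_card x (true, d)
    have e2 := nodeDist_ge_card (false, u) y
    obtain ⟨tx, sx⟩ := x
    obtain ⟨ty, sy⟩ := y
    cases tx <;> cases ty
    · have hs : sx ∈ U := by simpa using hxm
      have c := card_symmDiff_of_comparable (hU sx hs)
      have t := card_symmDiff_triangle sx u sy
      simp only [nodeDist] at e1 e2 ⊢
      simp at e1 e2 ⊢
      omega
    · simp only [nodeDist] at e1 e2 ⊢
      simp at e1 e2 ⊢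
      omega
    · simp only [nodeDist] at e1 e2 ⊢
      simp at e1 e2 ⊢
      omega
    · have hs : sy ∈ D := by simpa using hym
      have c := card_symmDiff_of_comparable (hD sy hs)
      have t := card_symmDiff_triangle sx d sy
      simp only [nodeDist] at e1 e2 ⊢
      simp at e1 e2 ⊢
      omega
  simp only [Multiset.map_cons, Multiset.sum_cons]
  omega

lemma nodeDist_triangle_same (x : Bool × Finset α) (t : Bool) (d d' : Finset α) :
    nodeDist x (t, d') ≤ nodeDist x (t, d) + (symmDiff d d').card := by
  have t1 := card_symmDiff_triangle x.2 d d'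
  have h1 := card_le_add_symmDiff d d'
  have h2 := card_le_add_symmDiff d' d
  rw [symmDiff_comm] at h2
  unfold nodeDist
  split_ifs
  · exact t1
  · dsimp only
    omega

lemma nodeDist_comm (x y : Bool × Finset α) : nodeDist x y = nodeDist y x := by
  unfold nodeDist
  rw [symmDiff_comm, add_comm]
  simp only [eq_comm]

/-- A down crossing changes its label. -/
lemma Matched.moveD {D₀ U₀ D U : Multiset (Finset α)} {k : ℕ} {d d' : Finset α}
    (h : Matched D₀ U₀ (d ::ₘ D) U k) :
    Matched D₀ U₀ (d' ::ₘ D) U (k + (symmDiff d d').card) := by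
  obtain ⟨A, h1, h2, h3⟩ := h
  have hd : (true, d) ∈ A.map Prod.snd := by rw [h2]; simp
  obtain ⟨⟨x, y⟩, ha, rfl⟩ := Multiset.mem_map.1 hd
  obtain ⟨A₁, rfl⟩ := Multiset.exists_cons_of_mem ha
  simp only [Multiset.map_cons, Multiset.cons_add, Multiset.cons_inj_right,
    Multiset.sum_cons] at h1 h2 h3
  refine ⟨(x, (true, d')) ::ₘ A₁, by simpa using h1, by simp [h2], ?_⟩
  have := nodeDist_triangle_same x true d d'
  simp only [Multiset.map_cons, Multiset.sum_cons]
  omega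

/-- An up crossing changes its label. -/
lemma Matched.moveU {D₀ U₀ D U : Multiset (Finset α)} {k : ℕ} {u u' : Finset α}
    (h : Matched D₀ U₀ D (u ::ₘ U) k) :
    Matched D₀ U₀ D (u' ::ₘ U) (k + (symmDiff u u').card) := by
  obtain ⟨A, h1, h2, h3⟩ := h
  have hd : (false, u) ∈ A.map Prod.fst := by rw [h1]; simp
  obtain ⟨⟨x, y⟩, ha, rfl⟩ := Multiset.mem_map.1 hd
  obtain ⟨A₁, rfl⟩ := Multiset.exists_cons_of_mem ha
  simp only [Multiset.map_cons, Multiset.add_cons, Multiset.cons_inj_right,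
    Multiset.sum_cons] at h1 h2 h3
  refine ⟨((false, u'), y) ::ₘ A₁, by simp [h1], by simpa using h2, ?_⟩
  have := nodeDist_triangle_same y false u u'
  rw [nodeDist_comm y, nodeDist_comm y] at this
  simp only [Multiset.map_cons, Multiset.sum_cons]
  omega

/-- Suppose an odd number of sets is matched with their complements in `B`. If `b ∈ B` lay in no
symmetric difference of matched sets, as many of the sets would contain `b` as not, which is
impossible. Hence the symmetric differences cover `B`. -/
lemma card_le_of_matching {B : Finset α} (D : Multiset (Finset α)) (hodd : Odd D.card) (t : Bool)
    (A : Multiset ((Bool × Finset α) × (Bool × Finset α)))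
    (h1 : A.map Prod.fst = D.map (Prod.mk t))
    (h2 : A.map Prod.snd = (D.map (fun d => B \ d)).map (Prod.mk t)) :
    B.card ≤ (A.map (fun a => nodeDist a.1 a.2)).sum := by
  have key : ∀ b ∈ B, 1 ≤ (A.map (fun a => if b ∈ symmDiff a.1.2 a.2.2 then 1 else 0)).sum := by
    intro b hb
    by_contra hcon
    have hz : (A.map (fun a => if b ∈ symmDiff a.1.2 a.2.2 then 1 else 0)).sum = 0 := by omega
    rw [Multiset.sum_eq_zero_iff] at hz
    have hz' : ∀ a ∈ A, (b ∈ a.1.2 ↔ b ∈ a.2.2) := by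
      intro a ha
      have h0 := hz _ (Multiset.mem_map_of_mem _ ha)
      by_contra hne
      have hmem : b ∈ symmDiff a.1.2 a.2.2 := by rw [Finset.mem_symmDiff]; tauto
      rw [if_pos hmem] at h0
      exact one_ne_zero h0
    have c1 : (A.map Prod.fst).countP (fun x => b ∈ x.2) = D.countP (fun d => b ∈ d) := by
      rw [h1, Multiset.countP_map, Multiset.countP_eq_card_filter]
    have c2 : (A.map Prod.snd).countP (fun x => b ∈ x.2) = D.countP (fun d => ¬ b ∈ d) := by
      rw [h2, Multiset.map_map, Multiset.countP_map, Multiset.countP_eq_card_filter]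
      simp [hb]
    have c3 : (A.map Prod.fst).countP (fun x => b ∈ x.2)
        = (A.map Prod.snd).countP (fun x => b ∈ x.2) := by
      rw [Multiset.countP_map, Multiset.countP_map]
      congr 1
      exact Multiset.filter_congr hz'
    have c4 := Multiset.card_eq_countP_add_countP (fun d => b ∈ d) D
    rw [← c2, ← c3, c1] at c4
    rw [c4] at hodd
    exact (Nat.not_odd_iff_even.2 ⟨_, rfl⟩) hodd
  have e1 : ∀ a ∈ A, nodeDist a.1 a.2 = (symmDiff a.1.2 a.2.2).card := by
    intro a ha
    have m1 : a.1 ∈ A.map Prod.fst := Multiset.mem_map_of_mem _ ha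
    have m2 : a.2 ∈ A.map Prod.snd := Multiset.mem_map_of_mem _ ha
    rw [h1] at m1; rw [h2] at m2
    obtain ⟨_, _, m1⟩ := Multiset.mem_map.1 m1
    obtain ⟨_, _, m2⟩ := Multiset.mem_map.1 m2
    rw [nodeDist, ← m1, ← m2]; simp
  rw [Multiset.map_congr rfl e1]
  calc B.card = ∑ b ∈ B, 1 := by simp
    _ ≤ ∑ b ∈ B, (A.map (fun a => if b ∈ symmDiff a.1.2 a.2.2 then 1 else 0)).sum :=
        Finset.sum_le_sum key
    _ = (A.map (fun a => ∑ b ∈ B, if b ∈ symmDiff a.1.2 a.2.2 then 1 else 0)).sum := by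
        clear key e1 h1 h2
        induction A using Multiset.induction_on with
        | empty => simp
        | cons a A ih => simp only [Multiset.map_cons, Multiset.sum_cons, Finset.sum_add_distrib, ih]
    _ ≤ _ := by
        apply Multiset.sum_map_le_sum_map
        intro a ha
        rw [Finset.sum_boole]
        exact Finset.card_le_card (fun x hx => (Finset.mem_filter.1 hx).2)

lemma filter_tag_true (D U : Multiset (Finset α)) :
    (D.map (Prod.mk true) + U.map (Prod.mk false)).filter (fun x => x.1 = true)
      = D.map (Prod.mk true) := by
  rw [Multiset.filter_add, Multiset.filter_eq_self.2, Multiset.filter_eq_nil.2, add_zero] <;>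
    simp

lemma filter_tag_false (D U : Multiset (Finset α)) :
    (D.map (Prod.mk true) + U.map (Prod.mk false)).filter (fun x => ¬ x.1 = true)
      = U.map (Prod.mk false) := by
  rw [Multiset.filter_add, Multiset.filter_eq_nil.2, Multiset.filter_eq_self.2, zero_add] <;>
    simp

/-- If crossings forming chains are matched with their own complements, and there is one more down
crossing than up crossings, the matching costs at least `|B| = |R|`. Arcs from a down crossing `d`
to an up crossing `u` are removed by induction: such an arc has length `||d| - |u||`, which equals
the cost of annihilating the complements of `d` and `u`. -/
lemma card_le_of_glued {B R : Finset α} (hBR : B.card = R.card) (m : ℕ) :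
    ∀ (D U : Multiset (Finset α)) (k : ℕ), U.card = m → D.card = m + 1 →
      (∀ d ∈ D, d ⊆ B) → (∀ u ∈ U, u ⊆ R) →
      (∀ x ∈ D, ∀ y ∈ D, x ⊆ y ∨ y ⊆ x) → (∀ x ∈ U, ∀ y ∈ U, x ⊆ y ∨ y ⊆ x) →
      Matched D U (D.map (fun d => B \ d)) (U.map (fun u => R \ u)) k → B.card ≤ k := by
  induction m with
  | zero =>
    intro D U k hU hD hDB hUR cD cU hM
    obtain rfl := Multiset.card_eq_zero.1 hU
    obtain ⟨A, h1, h2, h3⟩ := hM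
    refine le_trans (card_le_of_matching D (by rw [hD]; decide) true A ?_ ?_) h3
    · simpa using h1
    · simpa using h2
  | succ m ih =>
    intro D U k hU hD hDB hUR cD cU hM
    obtain ⟨A, h1, h2, h3⟩ := hM
    by_cases hex : ∃ a ∈ A, a.1.1 = true ∧ a.2.1 = false
    · obtain ⟨⟨⟨t1, d⟩, ⟨t2, u⟩⟩, ha, rfl, rfl⟩ := hex
      have hd : d ∈ D := by
        have := Multiset.mem_map_of_mem Prod.fst ha
        rw [h1] at this
        simpa using this
      have hu : u ∈ U := by
        have := Multiset.mem_map_of_mem Prod.snd ha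
        rw [h2] at this
        simpa using this
      obtain ⟨D', rfl⟩ := Multiset.exists_cons_of_mem hd
      obtain ⟨U', rfl⟩ := Multiset.exists_cons_of_mem hu
      obtain ⟨A', rfl⟩ := Multiset.exists_cons_of_mem ha
      have hdB := hDB d hd
      have huR := hUR u hu
      have hM' : Matched D' U' ((B \ d) ::ₘ D'.map (fun d => B \ d))
          ((R \ u) ::ₘ U'.map (fun u => R \ u))
          (k - ((d.card - u.card) + (u.card - d.card))) := by
        refine ⟨A', ?_, ?_, ?_⟩
        · simp only [Multiset.map_cons, Multiset.cons_add, Multiset.cons_inj_right] at h1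
          simpa only [Multiset.map_cons] using h1
        · simpa using h2
        · simp only [Multiset.map_cons, Multiset.sum_cons] at h3
          have : nodeDist (true, d) (false, u) = (d.card - u.card) + (u.card - d.card) := by
            simp [nodeDist]
          omega
      have hk : (d.card - u.card) + (u.card - d.card) ≤ k := by
        simp only [Multiset.map_cons, Multiset.sum_cons] at h3
        have : nodeDist (true, d) (false, u) = (d.card - u.card) + (u.card - d.card) := by
          simp [nodeDist]
        omega
      have hM2 := hM'.annihilate ?_ ?_
      · refine ih D' U' k (by simpa using hU) (by simpa using hD)
          (fun x hx => hDB x (Multiset.mem_cons_of_mem hx))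
          (fun x hx => hUR x (Multiset.mem_cons_of_mem hx))
          (fun x hx y hy => cD x (Multiset.mem_cons_of_mem hx) y (Multiset.mem_cons_of_mem hy))
          (fun x hx y hy => cU x (Multiset.mem_cons_of_mem hx) y (Multiset.mem_cons_of_mem hy))
          (hM2.mono ?_)
        rw [Finset.card_sdiff_of_subset hdB, Finset.card_sdiff_of_subset huR]
        have := Finset.card_le_card hdB
        have := Finset.card_le_card huR
        omega
      · intro y hy
        obtain ⟨x, hx, rfl⟩ := Multiset.mem_map.1 hy
        rcases cD d hd x (Multiset.mem_cons_of_mem hx) with h | h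
        · exact Or.inr (Finset.sdiff_subset_sdiff le_rfl h)
        · exact Or.inl (Finset.sdiff_subset_sdiff le_rfl h)
      · intro y hy
        obtain ⟨x, hx, rfl⟩ := Multiset.mem_map.1 hy
        rcases cU u hu x (Multiset.mem_cons_of_mem hx) with h | h
        · exact Or.inl (Finset.sdiff_subset_sdiff le_rfl h)
        · exact Or.inr (Finset.sdiff_subset_sdiff le_rfl h)
    · have hall : ∀ a ∈ A, a.1.1 = true → a.2.1 = true := by
        intro a ha h
        by_contra hne
        exact hex ⟨a, ha, h, by simpa using hne⟩
      have hcard1 : (A.filter (fun a => a.1.1 = true)).map Prod.fst = D.map (Prod.mk true) := by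
        have := congrArg (Multiset.filter (fun x : Bool × Finset α => x.1 = true)) h1
        rwa [Multiset.filter_map, filter_tag_true] at this
      have hcard2 : (A.filter (fun a => a.2.1 = true)).map Prod.snd
          = (D.map (fun d => B \ d)).map (Prod.mk true) := by
        have := congrArg (Multiset.filter (fun x : Bool × Finset α => x.1 = true)) h2
        rwa [Multiset.filter_map, filter_tag_true] at this
      have hcard3 : (A.filter (fun a => ¬ a.1.1 = true)).map Prod.fst
          = (U.map (fun u => R \ u)).map (Prod.mk false) := by
        have := congrArg (Multiset.filter (fun x : Bool × Finset α => ¬ x.1 = true)) h1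
        rwa [Multiset.filter_map, filter_tag_false] at this
      have hcard4 : (A.filter (fun a => ¬ a.2.1 = true)).map Prod.snd
          = U.map (Prod.mk false) := by
        have := congrArg (Multiset.filter (fun x : Bool × Finset α => ¬ x.1 = true)) h2
        rwa [Multiset.filter_map, filter_tag_false] at this
      have hEq : A.filter (fun a => a.1.1 = true) = A.filter (fun a => a.2.1 = true) := by
        apply Multiset.eq_of_le_of_card_le
        · exact Multiset.le_filter.2 ⟨Multiset.filter_le _ _, fun a ha =>
            hall a (Multiset.mem_filter.1 ha).1 (Multiset.mem_filter.1 ha).2⟩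
        · have e1 := congrArg Multiset.card hcard1
          have e2 := congrArg Multiset.card hcard2
          simp only [Multiset.card_map] at e1 e2
          omega
      have hEq' : A.filter (fun a => ¬ a.1.1 = true) = A.filter (fun a => ¬ a.2.1 = true) := by
        have e1 := Multiset.filter_add_not (fun a => a.1.1 = true) A
        have e2 := Multiset.filter_add_not (fun a => a.2.1 = true) A
        rw [hEq] at e1
        exact add_left_cancel (e1.trans e2.symm)
      have hsum := congrArg (fun M => (Multiset.map (fun a => nodeDist a.1 a.2) M).sum)
        (Multiset.filter_add_not (fun a => a.1.1 = true) A)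
      simp only [Multiset.map_add, Multiset.sum_add] at hsum
      rcases Nat.even_or_odd (m + 1) with hev | hod
      · have hodd : Odd D.card := by rw [hD]; exact hev.add_one
        rw [← hEq] at hcard2
        have := card_le_of_matching D hodd true _ hcard1 hcard2
        omega
      · rw [← hEq'] at hcard4
        have := card_le_of_matching (B := R) (U.map (fun u => R \ u))
          (by rw [Multiset.card_map, hU]; exact hod) false _ hcard3 ?_
        · omega
        · have : (U.map (fun u => R \ u)).map (fun u => R \ u) = U := by
            rw [Multiset.map_map]
            refine (Multiset.map_congr rfl fun u hu => ?_).trans (Multiset.map_id U)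
            simp [Finset.inter_eq_right.2 (hUR u hu)]
          rw [hcard4, this]


/-- Labels `f z` of the down crossings of `σ`, the places `z ≤ n` with `σ z` but not `σ (z + 1)`. -/
noncomputable def downs (n : ℕ) (σ : ℕ → Prop) (f : ℕ → Finset α) : Multiset (Finset α) :=
  ∑ z ∈ Finset.range (n + 1), if σ z ∧ ¬ σ (z + 1) then {f z} else 0

/-- Labels of the up crossings of `σ`, which are the down crossings of its negation. -/
noncomputable def ups (n : ℕ) (σ : ℕ → Prop) (f : ℕ → Finset α) : Multiset (Finset α) :=
  downs n (fun j => ¬ σ j) f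

lemma mem_downs {n : ℕ} {σ : ℕ → Prop} {f : ℕ → Finset α} {x : Finset α} :
    x ∈ downs n σ f ↔ ∃ z ≤ n, (σ z ∧ ¬ σ (z + 1)) ∧ x = f z := by
  unfold downs
  rw [Multiset.mem_sum]
  constructor
  · rintro ⟨z, hz, hx⟩
    split_ifs at hx with h
    · exact ⟨z, by simpa [Nat.lt_succ_iff] using hz, h, by simpa using hx⟩
    · simp at hx
  · rintro ⟨z, hz, h, rfl⟩
    exact ⟨z, by simpa [Nat.lt_succ_iff] using hz, by simp [h]⟩

lemma downs_comparable {n : ℕ} {σ : ℕ → Prop} {f : ℕ → Finset α} (hf : Monotone f) {z : ℕ} :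
    ∀ y ∈ downs n σ f, f z ⊆ y ∨ y ⊆ f z := by
  intro y hy
  obtain ⟨w, _, _, rfl⟩ := mem_downs.1 hy
  rcases le_total z w with h | h
  · exact Or.inl (hf h)
  · exact Or.inr (hf h)

lemma downs_congr {n : ℕ} {σ σ' : ℕ → Prop} {f f' : ℕ → Finset α}
    (hσ : ∀ j ≤ n + 1, (σ j ↔ σ' j)) (hf : ∀ z ≤ n, σ z → ¬ σ (z + 1) → f z = f' z) :
    downs n σ f = downs n σ' f' := by
  unfold downs
  refine Finset.sum_congr rfl fun z hz => ?_
  have hz' : z ≤ n := by simpa [Nat.lt_succ_iff] using hz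
  rw [← hσ z (by omega), ← hσ (z + 1) (by omega)]
  split_ifs with h
  · rw [hf z hz' h.1 h.2]
  · rfl

lemma downs_split {n i : ℕ} (hi : i + 1 ≤ n) (σ : ℕ → Prop) (f : ℕ → Finset α) :
    downs n σ f = (if σ i ∧ ¬ σ (i + 1) then {f i} else 0)
      + ((if σ (i + 1) ∧ ¬ σ (i + 2) then {f (i + 1)} else 0)
      + ∑ z ∈ ((Finset.range (n + 1)).erase i).erase (i + 1),
          if σ z ∧ ¬ σ (z + 1) then {f z} else 0) := by
  unfold downs
  rw [← Finset.add_sum_erase (Finset.range (n + 1)) _ (a := i) (by simp; omega),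
    ← Finset.add_sum_erase ((Finset.range (n + 1)).erase i) _ (a := i + 1) (by simp; omega)]

/-- `σ` goes from true to false, so it goes down once more than up. -/
lemma card_downs {n : ℕ} {σ : ℕ → Prop} (f g : ℕ → Finset α) (h0 : σ 0) (hn : ¬ σ (n + 1)) :
    (downs n σ f).card = (ups n σ g).card + 1 := by
  have key : ∀ m, (downs m σ f).card + (if σ (m + 1) then 1 else 0)
      = (ups m σ g).card + 1 := by
    intro m
    induction m with
    | zero =>
      by_cases h : σ 1 <;> simp [downs, ups, h0, h]
    | succ m ih =>
      have e1 : downs (m + 1) σ f = downs m σ f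
          + if σ (m + 1) ∧ ¬ σ (m + 1 + 1) then {f (m + 1)} else 0 := by
        rw [downs, Finset.sum_range_succ]; rfl
      have e2 : ups (m + 1) σ g = ups m σ g
          + if ¬ σ (m + 1) ∧ ¬ ¬ σ (m + 1 + 1) then {g (m + 1)} else 0 := by
        unfold ups downs; rw [Finset.sum_range_succ]; congr
      rw [e1, e2, Multiset.card_add, Multiset.card_add]
      by_cases h : σ (m + 1) <;> by_cases h' : σ (m + 1 + 1) <;> simp [h, h'] at ih ⊢ <;> omega
  have := key n
  simpa [hn] using this

/-- Reversing and negating `σ` turns down crossings into down crossings, here with complemented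
labels. -/
lemma downs_reverse {n : ℕ} {σ σ' : ℕ → Prop} {f f' : ℕ → Finset α} {B : Finset α}
    (hσ : ∀ j ≤ n + 1, (σ' (n + 1 - j) ↔ ¬ σ j))
    (hf : ∀ z ≤ n, f' (n - z) = B \ f z) :
    downs n σ' f' = (downs n σ f).map (fun d => B \ d) := by
  unfold downs
  rw [← Finset.sum_range_reflect]
  have hmap := map_sum (Multiset.mapAddMonoidHom (fun d : Finset α => B \ d))
    (fun z => if σ z ∧ ¬ σ (z + 1) then ({f z} : Multiset (Finset α)) else 0)
    (Finset.range (n + 1))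
  simp only [Multiset.coe_mapAddMonoidHom] at hmap
  rw [hmap]
  refine Finset.sum_congr rfl fun z hz => ?_
  have hz' : z ≤ n := by simpa [Nat.lt_succ_iff] using hz
  have a1 := hσ z (by omega)
  have a2 := hσ (z + 1) (by omega)
  have e1 : n + 1 - z = n - z + 1 := by omega
  have e2 : n + 1 - (z + 1) = n - z := by omega
  have e3 : n + 1 - 1 - z = n - z := by omega
  rw [e1] at a1
  rw [e2] at a2
  rw [e3, hf z hz']
  by_cases h : σ z <;> by_cases h' : σ (z + 1) <;> simp [a1, a2, h, h']

/-- Changing the single value `σ (i + 1)` affects only the crossings at `i` and `i + 1`: depending on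
`σ i` and `σ (i + 2)`, one crossing moves between these places, or a pair of crossings is created or
annihilated. In all cases this costs one unit. -/
lemma Matched.flip {D₀ U₀ : Multiset (Finset α)} {k n i : ℕ} {σ σ' : ℕ → Prop}
    {β ρ : ℕ → Finset α} (hi : i + 1 ≤ n)
    (hne : ∀ j ≠ i + 1, (σ' j ↔ σ j)) (hflip : σ' (i + 1) ↔ ¬ σ (i + 1))
    (hβ : Monotone β) (hρ : Monotone ρ)
    (b0 : (β i).card = i) (b1 : (β (i + 1)).card = i + 1)
    (r0 : (ρ i).card = i) (r1 : (ρ (i + 1)).card = i + 1)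
    (h : Matched D₀ U₀ (downs n σ β) (ups n σ ρ) k) :
    Matched D₀ U₀ (downs n σ' β) (ups n σ' ρ) (k + 1) := by
  have cD : ∀ z, ∀ y ∈ downs n σ β, β z ⊆ y ∨ y ⊆ β z := fun z => downs_comparable hβ
  have cU : ∀ z, ∀ y ∈ ups n σ ρ, y ⊆ ρ z ∨ ρ z ⊆ y :=
    fun z y hy => (downs_comparable hρ y hy).symm
  have d1 : (symmDiff (β i) (β (i + 1))).card = 1 := by
    rw [card_symmDiff_of_comparable (Or.inl (hβ (by omega : i ≤ i + 1)))]; omega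
  have d2 : (symmDiff (ρ i) (ρ (i + 1))).card = 1 := by
    rw [card_symmDiff_of_comparable (Or.inl (hρ (by omega : i ≤ i + 1)))]; omega
  have d3 : (symmDiff (β (i + 1)) (β i)).card = 1 := by rw [symmDiff_comm]; exact d1
  have d4 : (symmDiff (ρ (i + 1)) (ρ i)).card = 1 := by rw [symmDiff_comm]; exact d2
  have s1 := hne i (by omega)
  have s2 := hne (i + 2) (by omega)
  have rest : ∀ (τ τ' : ℕ → Prop) (f : ℕ → Finset α), (∀ j ≠ i + 1, (τ' j ↔ τ j)) →
      (∑ z ∈ ((Finset.range (n + 1)).erase i).erase (i + 1),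
        if τ' z ∧ ¬ τ' (z + 1) then ({f z} : Multiset (Finset α)) else 0)
      = ∑ z ∈ ((Finset.range (n + 1)).erase i).erase (i + 1),
        if τ z ∧ ¬ τ (z + 1) then ({f z} : Multiset (Finset α)) else 0 := by
    intro τ τ' f ht
    refine Finset.sum_congr rfl fun z hz => ?_
    simp only [Finset.mem_erase] at hz
    rw [ht z (by omega), ht (z + 1) (by omega)]
  have q1 := downs_split hi σ β
  have q2 := downs_split hi σ' β
  have q3 := downs_split hi (fun j => ¬ σ j) ρ
  have q4 := downs_split hi (fun j => ¬ σ' j) ρ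
  rw [rest σ σ' β hne] at q2
  rw [rest (fun j => ¬ σ j) (fun j => ¬ σ' j) ρ (fun j hj => not_congr (hne j hj))] at q4
  change ups n σ ρ = _ at q3
  change ups n σ' ρ = _ at q4
  generalize (∑ z ∈ ((Finset.range (n + 1)).erase i).erase (i + 1),
        if σ z ∧ ¬ σ (z + 1) then ({β z} : Multiset (Finset α)) else 0) = D at q1 q2
  generalize (∑ z ∈ ((Finset.range (n + 1)).erase i).erase (i + 1),
        if ¬ σ z ∧ ¬ ¬ σ (z + 1) then ({ρ z} : Multiset (Finset α)) else 0) = U at q3 q4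
  rw [q1] at cD
  rw [q3] at cU
  rw [q1, q3] at h
  rw [q2, q4]
  -- the eight cases are ordered by the truth of `σ i`, `σ (i + 1)`, `σ (i + 2)`, true first
  by_cases h0 : σ i <;> by_cases h1 : σ (i + 1) <;> by_cases h2 : σ (i + 2) <;>
    simp only [s1, s2, hflip, h0, h1, h2, not_true_eq_false, not_false_eq_true, and_true, and_false,
      if_true, if_false, zero_add, Multiset.singleton_add, and_self] at h cD cU ⊢
  · exact (h.create).mono (by omega)
  · exact (h.moveD).mono (by omega)
  · exact (h.annihilate (fun y hy => cD _ y (Multiset.mem_cons_of_mem hy))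
      (fun y hy => cU _ y (Multiset.mem_cons_of_mem hy))).mono (by omega)
  · exact (h.moveD).mono (by omega)
  · exact (h.moveU).mono (by omega)
  · exact (h.annihilate (fun y hy => cD _ y (Multiset.mem_cons_of_mem hy))
      (fun y hy => cU _ y (Multiset.mem_cons_of_mem hy))).mono (by omega)
  · exact (h.moveU).mono (by omega)
  · exact (h.create).mono (by omega)

end Matching

/-! ### Orders of the points and their lattice paths -/

section Positions

set_option linter.unusedSectionVars false

variable {α : Type*} [DecidableEq α]

/-- `r` puts the points of `S` bijectively in the places `0, …, N - 1`. -/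
structure IsPlacement (S : Finset α) (N : ℕ) (r : α → ℕ) : Prop where
  inj : ∀ x ∈ S, ∀ y ∈ S, r x = r y → x = y
  lt : ∀ x ∈ S, r x < N
  card : S.card = N

/-- The points of `T` in the first `k` places. -/
noncomputable def initSeg (T : Finset α) (r : α → ℕ) (k : ℕ) : Finset α :=
  T.filter (fun x => r x < k)

/-- For `1 ≤ j ≤ n`: more blue than red points occupy the first `2 * j - 1` places. True at `0` and
false beyond `n` by convention. -/
def pathSign (n : ℕ) (B R : Finset α) (r : α → ℕ) (j : ℕ) : Prop :=
  j = 0 ∨ (j ≤ n ∧ (initSeg R r (2 * j - 1)).card < (initSeg B r (2 * j - 1)).card)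

lemma initSeg_mono (T : Finset α) (r : α → ℕ) : Monotone (fun z => initSeg T r (2 * z)) := by
  intro a b hab x hx
  simp only [initSeg, Finset.mem_filter] at hx ⊢
  exact ⟨hx.1, by omega⟩

lemma IsPlacement.image_eq {S : Finset α} {N : ℕ} {r : α → ℕ} (h : IsPlacement S N r) :
    S.image r = Finset.range N := by
  apply Finset.eq_of_subset_of_card_le
  · intro y hy
    obtain ⟨x, hx, rfl⟩ := Finset.mem_image.1 hy
    exact Finset.mem_range.2 (h.lt x hx)
  · rw [Finset.card_image_of_injOn (fun x hx y hy => h.inj x hx y hy), h.card, Finset.card_range]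

lemma IsPlacement.exists_eq {S : Finset α} {N : ℕ} {r : α → ℕ} (h : IsPlacement S N r) {k : ℕ}
    (hk : k < N) : ∃ x ∈ S, r x = k := by
  have : k ∈ S.image r := by rw [h.image_eq]; simpa using hk
  simpa using this

lemma IsPlacement.card_initSeg {S : Finset α} {N : ℕ} {r : α → ℕ} (h : IsPlacement S N r)
    {k : ℕ} (hk : k ≤ N) : (initSeg S r k).card = k := by
  have : (initSeg S r k).image r = Finset.range k := by
    ext y
    simp only [initSeg, Finset.mem_image, Finset.mem_filter, Finset.mem_range]
    constructor
    · rintro ⟨x, ⟨_, hx⟩, rfl⟩; exact hx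
    · intro hy
      obtain ⟨x, hx, rfl⟩ := h.exists_eq (lt_of_lt_of_le hy hk)
      exact ⟨x, ⟨hx, hy⟩, rfl⟩
  have e := congrArg Finset.card this
  rwa [Finset.card_image_of_injOn, Finset.card_range] at e
  intro x hx y hy
  exact h.inj x (Finset.mem_filter.1 hx).1 y (Finset.mem_filter.1 hy).1

lemma IsPlacement.card_add {B R : Finset α} {N : ℕ} {r : α → ℕ}
    (h : IsPlacement (R ∪ B) N r) (hd : Disjoint R B) {k : ℕ} (hk : k ≤ N) :
    (initSeg B r k).card + (initSeg R r k).card = k := by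
  have e := h.card_initSeg hk
  rw [initSeg, Finset.filter_union,
    Finset.card_union_of_disjoint (Finset.disjoint_filter_filter hd)] at e
  unfold initSeg
  omega

lemma initSeg_succ {S T : Finset α} {N : ℕ} {r : α → ℕ} (h : IsPlacement S N r)
    (hT : T ⊆ S) {x : α} (hx : x ∈ S) :
    initSeg T r (r x + 1) = if x ∈ T then insert x (initSeg T r (r x)) else initSeg T r (r x) := by
  ext y
  split_ifs with hxT
  · simp only [initSeg, Finset.mem_insert, Finset.mem_filter]
    constructor
    · rintro ⟨hy, hlt⟩
      rcases Nat.lt_succ_iff_lt_or_eq.1 hlt with h1 | h1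
      · exact Or.inr ⟨hy, h1⟩
      · exact Or.inl (h.inj y (hT hy) x hx h1)
    · rintro (rfl | ⟨hy, hlt⟩)
      · exact ⟨hxT, by omega⟩
      · exact ⟨hy, by omega⟩
  · simp only [initSeg, Finset.mem_filter]
    constructor
    · rintro ⟨hy, hlt⟩
      rcases Nat.lt_succ_iff_lt_or_eq.1 hlt with h1 | h1
      · exact ⟨hy, h1⟩
      · exact absurd (h.inj y (hT hy) x hx h1 ▸ hy) hxT
    · rintro ⟨hy, hlt⟩
      exact ⟨hy, by omega⟩

lemma card_initSeg_succ {S T : Finset α} {N : ℕ} {r : α → ℕ} (h : IsPlacement S N r)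
    (hT : T ⊆ S) {x : α} (hx : x ∈ S) :
    (initSeg T r (r x + 1)).card = (initSeg T r (r x)).card + if x ∈ T then 1 else 0 := by
  rw [initSeg_succ h hT hx]
  split_ifs with hxT
  · rw [Finset.card_insert_of_notMem]
    simp [initSeg]
  · rfl

lemma swap_apply_lt_iff {r : α → ℕ} {p q : α} (hpq : r q = r p + 1) {k : ℕ} (hk : k ≠ r p + 1)
    (x : α) : (r ∘ Equiv.swap p q) x < k ↔ r x < k := by
  simp only [Function.comp_apply, Equiv.swap_apply_def]
  split_ifs with h1 h2
  · subst h1; omega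
  · subst h2; omega
  · rfl

lemma initSeg_swap (T : Finset α) {r : α → ℕ} {p q : α} (hpq : r q = r p + 1) {k : ℕ}
    (hk : k ≠ r p + 1) : initSeg T (r ∘ Equiv.swap p q) k = initSeg T r k :=
  Finset.filter_congr fun x _ => swap_apply_lt_iff hpq hk x

lemma IsPlacement.swap {S : Finset α} {N : ℕ} {r : α → ℕ} (h : IsPlacement S N r) {p q : α}
    (hp : p ∈ S) (hq : q ∈ S) : IsPlacement S N (r ∘ Equiv.swap p q) := by
  have hmem : ∀ x ∈ S, Equiv.swap p q x ∈ S := by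
    intro x hx
    rw [Equiv.swap_apply_def]
    split_ifs <;> assumption
  refine ⟨fun x hx y hy hxy => ?_, fun x hx => h.lt _ (hmem x hx), h.card⟩
  exact (Equiv.swap p q).injective (h.inj _ (hmem x hx) _ (hmem y hy) hxy)

/-- Transposing the adjacent points `p` and `q` costs at most one, and costs nothing unless they have
different colours and are preceded by equally many blue and red points. -/
lemma Matched.swap {B R : Finset α} {n m : ℕ} {r : α → ℕ} {D₀ U₀ : Multiset (Finset α)}
    (hr : IsPlacement (R ∪ B) (2 * n) r) (hd : Disjoint R B) {p q : α}
    (hp : p ∈ R ∪ B) (hq : q ∈ R ∪ B) (hpq : r q = r p + 1)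
    (h : Matched D₀ U₀ (downs n (pathSign n B R r) (fun z => initSeg B r (2 * z)))
      (ups n (pathSign n B R r) (fun z => initSeg R r (2 * z))) m) :
    Matched D₀ U₀
      (downs n (pathSign n B R (r ∘ Equiv.swap p q))
        (fun z => initSeg B (r ∘ Equiv.swap p q) (2 * z)))
      (ups n (pathSign n B R (r ∘ Equiv.swap p q))
        (fun z => initSeg R (r ∘ Equiv.swap p q) (2 * z)))
      (m + if ((p ∈ B ↔ q ∈ R) ∧ (initSeg B r (r p)).card = (initSeg R r (r p)).card)
        then 1 else 0) := by
  have hr' := hr.swap hp hq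
  set r' := r ∘ Equiv.swap p q with hr'def
  have hqn := hr.lt q hq
  have hsB : B ⊆ R ∪ B := Finset.subset_union_right
  have hsR : R ⊆ R ∪ B := Finset.subset_union_left
  have hr'q : r' q = r p := by simp [hr'def]
  have hseg : ∀ (T : Finset α) (k : ℕ), k ≠ r p + 1 → initSeg T r' k = initSeg T r k :=
    fun T k hk => initSeg_swap T hpq hk
  have hpc : (p ∈ R ∧ p ∉ B) ∨ (p ∉ R ∧ p ∈ B) := by
    rcases Finset.mem_union.1 hp with h | h
    · exact Or.inl ⟨h, Finset.disjoint_left.1 hd h⟩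
    · exact Or.inr ⟨Finset.disjoint_right.1 hd h, h⟩
  have hqc : (q ∈ R ∧ q ∉ B) ∨ (q ∉ R ∧ q ∈ B) := by
    rcases Finset.mem_union.1 hq with h | h
    · exact Or.inl ⟨h, Finset.disjoint_left.1 hd h⟩
    · exact Or.inr ⟨Finset.disjoint_right.1 hd h, h⟩
  have sum0 := hr.card_add hd (k := r p) (by omega)
  have cB1 := card_initSeg_succ hr hsB hp
  have cR1 := card_initSeg_succ hr hsR hp
  have cB2 := card_initSeg_succ hr hsB hq
  have cR2 := card_initSeg_succ hr hsR hq
  have cB3 := card_initSeg_succ hr' hsB hq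
  have cR3 := card_initSeg_succ hr' hsR hq
  have sB1 := initSeg_succ hr hsB hp
  have sR1 := initSeg_succ hr hsR hp
  have sB3 := initSeg_succ hr' hsB hq
  have sR3 := initSeg_succ hr' hsR hq
  rw [hr'q, hseg B (r p) (by omega)] at cB3 sB3
  rw [hr'q, hseg R (r p) (by omega)] at cR3 sR3
  rw [hpq] at cB2 cR2
  rcases Nat.even_or_odd' (r p) with ⟨i, hi | hi⟩
  -- `r p` even: only the initial segment of odd size `r p + 1 = 2 * (i + 1) - 1` changes
  · have hev : ∀ T : Finset α, (fun z => initSeg T r' (2 * z)) = fun z => initSeg T r (2 * z) := by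
      intro T
      funext z
      exact hseg T _ (by omega)
    rw [hev B, hev R]
    have hne : ∀ j ≠ i + 1, (pathSign n B R r' j ↔ pathSign n B R r j) := by
      intro j hj
      unfold pathSign
      by_cases hj0 : j = 0
      · simp [hj0]
      · rw [hseg B _ (by omega), hseg R _ (by omega)]
    have hidx : 2 * (i + 1) - 1 = r p + 1 := by omega
    have hidx2 : 2 * (i + 1) = r p + 1 + 1 := by omega
    split_ifs with hflip
    · refine Matched.flip (i := i) (by omega) hne ?_ (initSeg_mono B r) (initSeg_mono R r)
        ?_ ?_ ?_ ?_ h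
      · have hin : i + 1 ≤ n := by omega
        simp only [pathSign, hidx, hin, Nat.succ_ne_zero, false_or, true_and]
        rw [cB1, cR1, cB3, cR3]
        rcases hpc with hpc | hpc <;> rcases hqc with hqc | hqc <;> simp [hpc, hqc] at hflip ⊢ <;>
          omega
      · simp only [← hi]; omega
      · simp only [hidx2]
        rw [cB2, cB1]
        rcases hpc with hpc | hpc <;> rcases hqc with hqc | hqc <;> simp [hpc, hqc] at hflip ⊢ <;>
          omega
      · simp only [← hi]; omega
      · simp only [hidx2]
        rw [cR2, cR1]
        rcases hpc with hpc | hpc <;> rcases hqc with hqc | hqc <;> simp [hpc, hqc] at hflip ⊢ <;>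
          omega
    · have hall : ∀ j, (pathSign n B R r' j ↔ pathSign n B R r j) := by
        intro j
        by_cases hj : j = i + 1
        · subst hj
          have hin : i + 1 ≤ n := by omega
          simp only [pathSign, hidx, hin, Nat.succ_ne_zero, false_or, true_and]
          rw [cB1, cR1, cB3, cR3]
          rcases hpc with hpc | hpc <;> rcases hqc with hqc | hqc <;>
            simp [hpc, hqc] at hflip ⊢ <;> omega
        · exact hne j hj
      have : pathSign n B R r' = pathSign n B R r := funext fun j => propext (hall j)
      rw [this, add_zero]
      exact h
  -- `r p` odd: only the initial segment of even size `r p + 1 = 2 * (i + 1)` changes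
  · have hsame : pathSign n B R r' = pathSign n B R r := by
      funext j
      unfold pathSign
      by_cases hj0 : j = 0
      · simp [hj0]
      · rw [hseg B _ (by omega), hseg R _ (by omega)]
    have hidx : 2 * (i + 1) - 1 = r p := by omega
    have hidx2 : 2 * (i + 1) = r p + 1 := by omega
    have hidx3 : 2 * (i + 1 + 1) - 1 = r p + 1 + 1 := by omega
    have hin : i + 1 ≤ n := by omega
    have hin' : i + 1 + 1 ≤ n := by omega
    have hD : downs n (pathSign n B R r') (fun z => initSeg B r' (2 * z))
        = downs n (pathSign n B R r) (fun z => initSeg B r (2 * z)) := by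
      rw [hsame]
      refine downs_congr (fun _ _ => Iff.rfl) fun z _ h1 h2 => ?_
      by_cases hz : z = i + 1
      · subst hz
        simp only [pathSign, hidx, hidx3, hin, hin', Nat.succ_ne_zero, false_or, true_and] at h1 h2
        rw [cB2, cR2, cB1, cR1] at h2
        simp only [hidx2]
        rw [sB1, sB3]
        rcases hpc with hpc | hpc <;> rcases hqc with hqc | hqc <;> simp [hpc, hqc] at h2 ⊢ <;>
          omega
      · exact hseg B _ (by omega)
    have hU : ups n (pathSign n B R r') (fun z => initSeg R r' (2 * z))
        = ups n (pathSign n B R r) (fun z => initSeg R r (2 * z)) := by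
      rw [hsame]
      refine downs_congr (fun _ _ => Iff.rfl) fun z _ h1 h2 => ?_
      by_cases hz : z = i + 1
      · subst hz
        simp only [pathSign, hidx, hidx3, hin, hin', Nat.succ_ne_zero, false_or, true_and,
          not_not] at h1 h2
        rw [cB2, cR2, cB1, cR1] at h2
        simp only [hidx2]
        rw [sR1, sR3]
        rcases hpc with hpc | hpc <;> rcases hqc with hqc | hqc <;> simp [hpc, hqc] at h2 ⊢ <;>
          omega
      · exact hseg R _ (by omega)
    rw [hD, hU]
    exact h.mono (Nat.le_add_right _ _)

/-- A matching between the crossings of an order and those of the reversed order costs at least `n`. -/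
lemma card_le_of_reversed {B R : Finset α} {n m : ℕ} {r₀ r : α → ℕ}
    (h₀ : IsPlacement (R ∪ B) (2 * n) r₀) (hd : Disjoint R B)
    (hB : B.card = n) (hR : R.card = n)
    (hrev : ∀ x ∈ R ∪ B, r x + r₀ x + 1 = 2 * n)
    (h : Matched (downs n (pathSign n B R r₀) (fun z => initSeg B r₀ (2 * z)))
      (ups n (pathSign n B R r₀) (fun z => initSeg R r₀ (2 * z)))
      (downs n (pathSign n B R r) (fun z => initSeg B r (2 * z)))
      (ups n (pathSign n B R r) (fun z => initSeg R r (2 * z))) m) : n ≤ m := by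
  have hcompl : ∀ T ⊆ R ∪ B, ∀ k ≤ 2 * n, initSeg T r (2 * n - k) = T \ initSeg T r₀ k := by
    intro T hT k hk
    ext x
    simp only [initSeg, Finset.mem_filter, Finset.mem_sdiff]
    constructor
    · rintro ⟨hx, h1⟩
      have := hrev x (hT hx)
      exact ⟨hx, fun h2 => by omega⟩
    · rintro ⟨hx, h1⟩
      have := hrev x (hT hx)
      refine ⟨hx, ?_⟩
      by_contra h2
      exact h1 ⟨hx, by omega⟩
  have hsB : B ⊆ R ∪ B := Finset.subset_union_right
  have hsR : R ⊆ R ∪ B := Finset.subset_union_left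
  have hσ : ∀ j ≤ n + 1, (pathSign n B R r (n + 1 - j) ↔ ¬ pathSign n B R r₀ j) := by
    intro j hj
    unfold pathSign
    rcases Nat.eq_zero_or_pos j with rfl | hpos
    · simp
    rcases Nat.eq_or_lt_of_le hj with rfl | hlt
    · simp
    have e : 2 * (n + 1 - j) - 1 = 2 * n - (2 * j - 1) := by omega
    have s := h₀.card_add hd (k := 2 * j - 1) (by omega)
    have iB : initSeg B r₀ (2 * j - 1) ⊆ B := Finset.filter_subset _ _
    have iR : initSeg R r₀ (2 * j - 1) ⊆ R := Finset.filter_subset _ _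
    have lB := Finset.card_le_card iB
    have lR := Finset.card_le_card iR
    rw [e, hcompl B hsB _ (by omega), hcompl R hsR _ (by omega),
      Finset.card_sdiff_of_subset iB, Finset.card_sdiff_of_subset iR]
    omega
  have hfB : ∀ z ≤ n, initSeg B r (2 * (n - z)) = B \ initSeg B r₀ (2 * z) := by
    intro z hz
    rw [← hcompl B hsB _ (by omega), Nat.mul_sub]
  have hfR : ∀ z ≤ n, initSeg R r (2 * (n - z)) = R \ initSeg R r₀ (2 * z) := by
    intro z hz
    rw [← hcompl R hsR _ (by omega), Nat.mul_sub]
  have eD := downs_reverse (f' := fun z => initSeg B r (2 * z)) hσ hfB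
  have eU : ups n (pathSign n B R r) (fun z => initSeg R r (2 * z))
      = (ups n (pathSign n B R r₀) (fun z => initSeg R r₀ (2 * z))).map (fun u => R \ u) :=
    downs_reverse (f' := fun z => initSeg R r (2 * z))
      (fun j hj => not_congr (hσ j hj)) hfR
  rw [eD, eU] at h
  rw [← hB]
  refine card_le_of_glued (hB.trans hR.symm) _ _ _ m rfl ?_ ?_ ?_ ?_ ?_ h
  · exact card_downs _ _ (Or.inl rfl) (by simp [pathSign])
  · intro d hd'
    obtain ⟨z, _, _, rfl⟩ := mem_downs.1 hd'
    exact Finset.filter_subset _ _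
  · intro d hd'
    obtain ⟨z, _, _, rfl⟩ := mem_downs.1 hd'
    exact Finset.filter_subset _ _
  · intro x hx y hy
    obtain ⟨z, _, _, rfl⟩ := mem_downs.1 hx
    exact downs_comparable (initSeg_mono B r₀) (z := z) y hy
  · intro x hx y hy
    obtain ⟨z, _, _, rfl⟩ := mem_downs.1 hx
    exact downs_comparable (initSeg_mono R r₀) (z := z) y hy

end Positions

/-! ### The rotating sweep line -/

section Sweep

/-- A linear functional of the form `p ↦ p.1 + ε * p.2`; for suitable `ε` it separates the points
of a finite set, and it then plays the role of the first coordinate. -/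
def shear (ε : ℝ) (p : ℝ × ℝ) : ℝ := p.1 + ε * p.2

lemma exists_shear (S : Finset (ℝ × ℝ)) :
    ∃ ε : ℝ, ∀ p ∈ S, ∀ q ∈ S, shear ε p = shear ε q → p = q := by
  obtain ⟨ε, hε⟩ := Infinite.exists_notMem_finset
    ((S ×ˢ S).image fun e : (ℝ × ℝ) × (ℝ × ℝ) => -(e.1.1 - e.2.1) / (e.1.2 - e.2.2))
  refine ⟨ε, fun p hp q hq hpq => ?_⟩
  unfold shear at hpq
  by_cases h2 : p.2 = q.2
  · rw [h2] at hpq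
    exact Prod.ext (by linarith) h2
  · refine absurd (Finset.mem_image.2 ⟨(p, q), Finset.mem_product.2 ⟨hp, hq⟩, ?_⟩) hε
    have : p.2 - q.2 ≠ 0 := sub_ne_zero.2 h2
    simp only
    field_simp
    linarith

lemma cross_shear (ε : ℝ) (p q x : ℝ × ℝ) :
    cross p q x = (shear ε q - shear ε p) * (x.2 - p.2) - (q.2 - p.2) * (shear ε x - shear ε p) := by
  unfold cross shear
  ring

lemma cross_swap (p q x : ℝ × ℝ) : cross q p x = -cross p q x := by
  unfold cross
  ring

/-- The pairs of points of `S`, listed in increasing order of the sheared first coordinate. -/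
noncomputable def orderedPairs (ε : ℝ) (S : Finset (ℝ × ℝ)) : Finset ((ℝ × ℝ) × (ℝ × ℝ)) :=
  (S ×ˢ S).filter fun e => shear ε e.1 < shear ε e.2

/-- Slope of the line through two points in the sheared coordinates. -/
noncomputable def slopeOf (ε : ℝ) (e : (ℝ × ℝ) × (ℝ × ℝ)) : ℝ :=
  (e.2.2 - e.1.2) / (shear ε e.2 - shear ε e.1)

/-- `r` is the order in which the sweep line meets the points of `S` once it has passed exactly
the slopes of the pairs in `O`: these pairs, and no others, have been reversed. -/
structure IsSweep (ε : ℝ) (S : Finset (ℝ × ℝ)) (N : ℕ) (O : Finset ((ℝ × ℝ) × (ℝ × ℝ)))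
    (r : ℝ × ℝ → ℕ) : Prop where
  sub : O ⊆ orderedPairs ε S
  low : ∀ e ∈ O, ∀ e' ∈ orderedPairs ε S, e' ∉ O → slopeOf ε e ≤ slopeOf ε e'
  placement : IsPlacement S N r
  lt_iff : ∀ x ∈ S, ∀ y ∈ S, shear ε x < shear ε y → (r x < r y ↔ (x, y) ∉ O)

lemma mem_orderedPairs {ε : ℝ} {S : Finset (ℝ × ℝ)} {p q : ℝ × ℝ} :
    (p, q) ∈ orderedPairs ε S ↔ p ∈ S ∧ q ∈ S ∧ shear ε p < shear ε q := by
  simp [orderedPairs, and_assoc]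

/-- Whenever the sweep is at slope `l`, the order agrees with the order of the values of
`x.2 - l * shear ε x`, wherever these differ. -/
lemma IsSweep.lt_iff_lt {ε : ℝ} {S : Finset (ℝ × ℝ)} {N : ℕ} {O : Finset ((ℝ × ℝ) × (ℝ × ℝ))}
    {r : ℝ × ℝ → ℕ} (h : IsSweep ε S N O r) (hinj : ∀ p ∈ S, ∀ q ∈ S, shear ε p = shear ε q → p = q)
    {l : ℝ} (h1 : ∀ e ∈ O, slopeOf ε e ≤ l)
    (h2 : ∀ e ∈ orderedPairs ε S, e ∉ O → l ≤ slopeOf ε e) {a b : ℝ × ℝ} (ha : a ∈ S) (hb : b ∈ S)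
    (hab : a.2 - l * shear ε a ≠ b.2 - l * shear ε b) :
    r a < r b ↔ a.2 - l * shear ε a < b.2 - l * shear ε b := by
  have main : ∀ a ∈ S, ∀ b ∈ S, a.2 - l * shear ε a ≠ b.2 - l * shear ε b →
      shear ε a < shear ε b → (r a < r b ↔ a.2 - l * shear ε a < b.2 - l * shear ε b) := by
    intro a ha b hb hab hlt
    rw [h.lt_iff a ha b hb hlt]
    have hpos : 0 < shear ε b - shear ε a := sub_pos.2 hlt
    constructor
    · intro hO
      have := h2 _ (mem_orderedPairs.2 ⟨ha, hb, hlt⟩) hO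
      rw [slopeOf, le_div_iff₀ hpos] at this
      exact lt_of_le_of_ne (by linarith) hab
    · intro hg hO
      have := h1 _ hO
      rw [slopeOf, div_le_iff₀ hpos] at this
      simp only at this
      linarith
  have hne : a ≠ b := fun e => hab (by rw [e])
  rcases lt_trichotomy (shear ε a) (shear ε b) with hlt | heq | hgt
  · exact main a ha b hb hab hlt
  · exact absurd (hinj a ha b hb heq) hne
  · have m := main b hb a ha hab.symm hgt
    have hr : r a ≠ r b := fun e => hne (h.placement.inj a ha b hb e)
    constructor
    · intro hlt
      by_contra hcon
      have := m.2 (lt_of_le_of_ne (not_lt.1 hcon) hab.symm)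
      omega
    · intro hlt
      by_contra hcon
      have := m.1 (by omega)
      linarith

/-- When the sweep line becomes parallel to the line through `p` and `q`, the points preceding
`p` (equivalently, preceding `q`) are those in the half-plane `cross p q x < 0`. -/
lemma IsSweep.side {ε : ℝ} {S : Finset (ℝ × ℝ)} {N : ℕ} {O : Finset ((ℝ × ℝ) × (ℝ × ℝ))}
    {r : ℝ × ℝ → ℕ} (h : IsSweep ε S N O r) (hinj : ∀ p ∈ S, ∀ q ∈ S, shear ε p = shear ε q → p = q)
    (hgp : GenPos S) {p q : ℝ × ℝ} (he : (p, q) ∈ orderedPairs ε S) (heO : (p, q) ∉ O)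
    (hmin : ∀ e ∈ orderedPairs ε S, e ∉ O → slopeOf ε (p, q) ≤ slopeOf ε e)
    {x : ℝ × ℝ} (hx : x ∈ S) (hxp : x ≠ p) (hxq : x ≠ q) :
    (r x < r p ↔ cross p q x < 0) ∧ (r x < r q ↔ cross p q x < 0) := by
  obtain ⟨hp, hq, hlt⟩ := mem_orderedPairs.1 he
  have hpos : 0 < shear ε q - shear ε p := sub_pos.2 hlt
  have hpq : p ≠ q := fun e => by rw [e] at hlt; exact lt_irrefl _ hlt
  have hc := hgp p hp q hq x hx hpq hxp.symm hxq.symm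
  set l := slopeOf ε (p, q) with hl
  have hlm : l * (shear ε q - shear ε p) = q.2 - p.2 := by
    rw [hl, slopeOf]
    exact div_mul_cancel₀ _ hpos.ne'
  have e1 : cross p q x = (shear ε q - shear ε p)
      * ((x.2 - l * shear ε x) - (p.2 - l * shear ε p)) := by
    rw [cross_shear ε, ← hlm]
    ring
  have e2 : q.2 - l * shear ε q = p.2 - l * shear ε p := by linarith
  have hne : x.2 - l * shear ε x ≠ p.2 - l * shear ε p := by
    intro e
    rw [e1, e, sub_self, mul_zero] at hc
    exact hc rfl
  have h1 : ∀ e ∈ O, slopeOf ε e ≤ l := fun e heo => h.low e heo _ he heO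
  have hs : cross p q x < 0 ↔ x.2 - l * shear ε x < p.2 - l * shear ε p := by
    rw [e1, ← sub_neg (a := x.2 - l * shear ε x)]
    exact ⟨fun h => (pos_iff_neg_of_mul_neg h).1 hpos, fun h => mul_neg_of_pos_of_neg hpos h⟩
  rw [hs]
  refine ⟨h.lt_iff_lt hinj h1 hmin hx hp hne, ?_⟩
  rw [h.lt_iff_lt hinj h1 hmin hx hq (by rwa [e2]), e2]

/-- The pair with the next slope occupies adjacent places, as no third point lies on its line. -/
lemma IsSweep.adjacent {ε : ℝ} {S : Finset (ℝ × ℝ)} {N : ℕ} {O : Finset ((ℝ × ℝ) × (ℝ × ℝ))}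
    {r : ℝ × ℝ → ℕ} (h : IsSweep ε S N O r) (hinj : ∀ p ∈ S, ∀ q ∈ S, shear ε p = shear ε q → p = q)
    (hgp : GenPos S) {p q : ℝ × ℝ} (he : (p, q) ∈ orderedPairs ε S) (heO : (p, q) ∉ O)
    (hmin : ∀ e ∈ orderedPairs ε S, e ∉ O → slopeOf ε (p, q) ≤ slopeOf ε e) :
    r q = r p + 1 := by
  obtain ⟨hp, hq, hlt⟩ := mem_orderedPairs.1 he
  have hr : r p < r q := (h.lt_iff p hp q hq hlt).2 heO
  by_contra hcon
  have hqN := h.placement.lt q hq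
  obtain ⟨x, hx, hxr⟩ := h.placement.exists_eq (k := r p + 1) (by omega)
  obtain ⟨s1, s2⟩ := h.side hinj hgp he heO hmin hx (fun e => by rw [e] at hxr; omega)
    (fun e => by rw [e] at hxr; omega)
  have := s1.2 (s2.1 (by omega))
  omega

lemma IsSweep.step {ε : ℝ} {S : Finset (ℝ × ℝ)} {N : ℕ} {O : Finset ((ℝ × ℝ) × (ℝ × ℝ))}
    {r : ℝ × ℝ → ℕ} (h : IsSweep ε S N O r) {p q : ℝ × ℝ} (he : (p, q) ∈ orderedPairs ε S)
    (hmin : ∀ e ∈ orderedPairs ε S, e ∉ O → slopeOf ε (p, q) ≤ slopeOf ε e)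
    (hadj : r q = r p + 1) :
    IsSweep ε S N (insert (p, q) O) (r ∘ Equiv.swap p q) := by
  obtain ⟨hp, hq, hlt⟩ := mem_orderedPairs.1 he
  refine ⟨Finset.insert_subset he h.sub, ?_, h.placement.swap hp hq, ?_⟩
  · intro e heO e' he' hn
    rw [Finset.mem_insert, not_or] at hn
    rcases Finset.mem_insert.1 heO with rfl | heO
    · exact hmin e' he' hn.2
    · exact h.low e heO e' he' hn.2
  · intro x hx y hy hxy
    have base := h.lt_iff x hx y hy hxy
    have i1 := h.placement.inj x hx p hp
    have i2 := h.placement.inj x hx q hq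
    have i3 := h.placement.inj y hy p hp
    have i4 := h.placement.inj y hy q hq
    rw [Finset.mem_insert, not_or, ← base, Prod.mk.injEq]
    simp only [Function.comp_apply, Equiv.swap_apply_def]
    by_cases x1 : x = p
    · subst x1
      by_cases y2 : y = q
      · subst y2
        have : y ≠ x := fun e => by rw [e] at hxy; exact lt_irrefl _ hxy
        simp [this]
        omega
      · have y1 : y ≠ x := fun e => by rw [e] at hxy; exact lt_irrefl _ hxy
        have := mt i3 y1
        have := mt i4 y2
        simp [y1, y2]
        omega
    · have := mt i1 x1
      by_cases x2 : x = q
      · subst x2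
        by_cases y1 : y = p
        · subst y1
          exact absurd hxy hlt.not_gt
        · have y2 : y ≠ x := fun e => by rw [e] at hxy; exact lt_irrefl _ hxy
          have := mt i3 y1
          have := mt i4 y2
          simp [y1, y2, x1]
          omega
      · have := mt i2 x2
        by_cases y1 : y = p
        · subst y1
          simp [x1, x2]
          omega
        · by_cases y2 : y = q
          · subst y2
            simp [x1, x2, y1]
            omega
          · simp [x1, x2, y1, y2]

/-- An adjacent transposition of points of different colours, preceded by equally many blue and
red points, happens at a balanced line. -/
lemma IsSweep.balanced {ε : ℝ} {R B : Finset (ℝ × ℝ)} {n : ℕ}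
    {O : Finset ((ℝ × ℝ) × (ℝ × ℝ))} {r : ℝ × ℝ → ℕ} (h : IsSweep ε (R ∪ B) (2 * n) O r)
    (hinj : ∀ p ∈ R ∪ B, ∀ q ∈ R ∪ B, shear ε p = shear ε q → p = q)
    (hgp : GenPos (R ∪ B)) (hd : Disjoint R B) (hR : R.card = n) (hB : B.card = n)
    {p q : ℝ × ℝ} (he : (p, q) ∈ orderedPairs ε (R ∪ B)) (heO : (p, q) ∉ O)
    (hmin : ∀ e ∈ orderedPairs ε (R ∪ B), e ∉ O → slopeOf ε (p, q) ≤ slopeOf ε e)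
    (hcol : p ∈ B ↔ q ∈ R) (hcard : (initSeg B r (r p)).card = (initSeg R r (r p)).card) :
    wPos B R p q = 0 ∧ wNeg B R p q = 0 := by
  obtain ⟨hp, hq, hlt⟩ := mem_orderedPairs.1 he
  have hadj := h.adjacent hinj hgp he heO hmin
  have hneg : ∀ T ⊆ R ∪ B, T.filter (fun x => cross p q x < 0) = initSeg T r (r p) := by
    intro T hT
    refine Finset.filter_congr fun x hx => ?_
    by_cases h1 : x = p
    · subst h1; simp [cross]
    by_cases h2 : x = q
    · subst h2; simp [cross, mul_comm]; omega
    exact (h.side hinj hgp he heO hmin (hT hx) h1 h2).1.symm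
  have hposi : ∀ T ⊆ R ∪ B,
      T.filter (fun x => 0 < cross p q x) = T.filter (fun x => ¬ r x < r q + 1) := by
    intro T hT
    refine Finset.filter_congr fun x hx => ?_
    by_cases h1 : x = p
    · subst h1; simp [cross]; omega
    by_cases h2 : x = q
    · subst h2; simp [cross, mul_comm]
    have hpq : p ≠ q := fun e => by rw [e] at hlt; exact lt_irrefl _ hlt
    have hc := hgp p hp q hq x (hT hx) hpq (Ne.symm h1) (Ne.symm h2)
    have hs := (h.side hinj hgp he heO hmin (hT hx) h1 h2).2
    have hrq : r x ≠ r q := fun e => h2 (h.placement.inj x (hT hx) q hq e)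
    constructor
    · intro hx0 hcon
      have := hs.1 (by omega)
      linarith
    · intro hx0
      refine lt_of_le_of_ne (not_lt.1 fun hcon => ?_) hc.symm
      have := hs.2 hcon
      omega
  have hsB : B ⊆ R ∪ B := Finset.subset_union_right
  have hsR : R ⊆ R ∪ B := Finset.subset_union_left
  have cB1 := card_initSeg_succ h.placement hsB hp
  have cR1 := card_initSeg_succ h.placement hsR hp
  have cB2 := card_initSeg_succ h.placement hsB hq
  have cR2 := card_initSeg_succ h.placement hsR hq
  rw [← hadj] at cB1 cR1
  have tB := Finset.card_filter_add_card_filter_not (s := B) (fun x => r x < r q + 1)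
  have tR := Finset.card_filter_add_card_filter_not (s := R) (fun x => r x < r q + 1)
  have hpc : (p ∈ R ∧ p ∉ B) ∨ (p ∉ R ∧ p ∈ B) := by
    rcases Finset.mem_union.1 hp with h | h
    · exact Or.inl ⟨h, Finset.disjoint_left.1 hd h⟩
    · exact Or.inr ⟨Finset.disjoint_right.1 hd h, h⟩
  have hqc : (q ∈ R ∧ q ∉ B) ∨ (q ∉ R ∧ q ∈ B) := by
    rcases Finset.mem_union.1 hq with h | h
    · exact Or.inl ⟨h, Finset.disjoint_left.1 hd h⟩
    · exact Or.inr ⟨Finset.disjoint_right.1 hd h, h⟩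
  unfold wPos wNeg
  rw [hneg B hsB, hneg R hsR, hposi B hsB, hposi R hsR]
  change (initSeg B r (r q + 1)).card + _ = _ at tB
  change (initSeg R r (r q + 1)).card + _ = _ at tR
  rcases hpc with hpc | hpc <;> rcases hqc with hqc | hqc <;>
    simp only [hpc, hqc, if_true, if_false, iff_true, iff_false, not_true_eq_false] at * <;> omega

/-- The balanced pairs whose line the sweep has already passed. -/
noncomputable def passedPairs (B R : Finset (ℝ × ℝ)) (O : Finset ((ℝ × ℝ) × (ℝ × ℝ))) :
    Finset ((ℝ × ℝ) × (ℝ × ℝ)) :=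
  (balancedPairs B R 0).filter fun e => e ∈ O ∨ (e.2, e.1) ∈ O

lemma card_passedPairs_insert {ε : ℝ} {B R : Finset (ℝ × ℝ)}
    {O : Finset ((ℝ × ℝ) × (ℝ × ℝ))}
    (hO : O ⊆ orderedPairs ε (R ∪ B)) {p q : ℝ × ℝ} (he : (p, q) ∈ orderedPairs ε (R ∪ B))
    (heO : (p, q) ∉ O)
    (hcol : p ∈ B ↔ q ∈ R) (hbal : wPos B R p q = 0 ∧ wNeg B R p q = 0) :
    (passedPairs B R O).card + 1 ≤ (passedPairs B R (insert (p, q) O)).card := by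
  obtain ⟨hp, hq, hlt⟩ := mem_orderedPairs.1 he
  have hqO : (q, p) ∉ O := fun hm => hlt.not_gt (mem_orderedPairs.1 (hO hm)).2.2
  have hsub : passedPairs B R O ⊆ passedPairs B R (insert (p, q) O) := by
    intro e hm
    simp only [passedPairs, Finset.mem_filter, Finset.mem_insert] at hm ⊢
    tauto
  obtain ⟨e, heN, heI⟩ : ∃ e, e ∉ passedPairs B R O ∧ e ∈ passedPairs B R (insert (p, q) O) := by
    by_cases hpB : p ∈ B
    · refine ⟨(p, q), ?_, ?_⟩
      · simp [passedPairs, heO, hqO]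
      · refine Finset.mem_filter.2 ⟨Finset.mem_filter.2 ⟨?_, hbal⟩, Or.inl ?_⟩
        · exact Finset.mem_product.2 ⟨hpB, hcol.1 hpB⟩
        · exact Finset.mem_insert_self _ _
    · have hpR : p ∈ R := (Finset.mem_union.1 hp).resolve_right hpB
      have hqB : q ∈ B := (Finset.mem_union.1 hq).resolve_left fun hqR => hpB (hcol.2 hqR)
      refine ⟨(q, p), ?_, ?_⟩
      · simp [passedPairs, heO, hqO]
      · have e1 : wPos B R q p = wNeg B R p q := by simp [wPos, wNeg, cross_swap p q]
        have e2 : wNeg B R q p = wPos B R p q := by simp [wPos, wNeg, cross_swap p q]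
        refine Finset.mem_filter.2 ⟨Finset.mem_filter.2 ⟨?_, e1.trans hbal.2, e2.trans hbal.1⟩,
          Or.inr ?_⟩
        · exact Finset.mem_product.2 ⟨hqB, hpR⟩
        · exact Finset.mem_insert_self _ _
  rw [← Finset.card_insert_of_notMem heN]
  exact Finset.card_le_card (Finset.insert_subset heI hsub)

/-- Before the sweep, the points are ordered by their sheared first coordinates. -/
lemma isSweep_initial {ε : ℝ} {S : Finset (ℝ × ℝ)} {N : ℕ} (hN : S.card = N)
    (hinj : ∀ p ∈ S, ∀ q ∈ S, shear ε p = shear ε q → p = q) :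
    IsSweep ε S N ∅ (fun x => (S.filter fun y => shear ε y < shear ε x).card) := by
  have hlt : ∀ x ∈ S, ∀ y, shear ε x < shear ε y →
      (S.filter fun z => shear ε z < shear ε x).card
        < (S.filter fun z => shear ε z < shear ε y).card := by
    intro x hx y hxy
    refine Finset.card_lt_card (Finset.ssubset_iff_of_subset ?_ |>.2 ⟨x, ?_, ?_⟩)
    · intro z hz
      rw [Finset.mem_filter] at hz ⊢
      exact ⟨hz.1, hz.2.trans hxy⟩
    · simp [hx, hxy]
    · simp
  refine ⟨by simp, by simp, ⟨?_, ?_, hN⟩, ?_⟩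
  · intro x hx y hy hxy
    rcases lt_trichotomy (shear ε x) (shear ε y) with h | h | h
    · exact absurd hxy (hlt x hx y h).ne
    · exact hinj x hx y hy h
    · exact absurd hxy (hlt y hy x h).ne'
  · intro x hx
    rw [← hN]
    exact Finset.card_lt_card (Finset.filter_ssubset.2 ⟨x, hx, lt_irrefl _⟩)
  · intro x hx y hy hxy
    simpa using hlt x hx y hxy

lemma IsSweep.reversed {ε : ℝ} {S : Finset (ℝ × ℝ)} {N : ℕ} {r₀ r : ℝ × ℝ → ℕ}
    (hinj : ∀ p ∈ S, ∀ q ∈ S, shear ε p = shear ε q → p = q)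
    (h₀ : IsSweep ε S N ∅ r₀) (h : IsSweep ε S N (orderedPairs ε S) r) :
    ∀ x ∈ S, r x + r₀ x + 1 = N := by
  intro x hx
  have hne : ∀ y ∈ S, y ≠ x → (r y < r x ↔ ¬ r₀ y < r₀ x) := by
    intro y hy hyx
    have i0 := mt (h₀.placement.inj y hy x hx) hyx
    have i1 := mt (h.placement.inj y hy x hx) hyx
    rcases lt_trichotomy (shear ε x) (shear ε y) with hlt | heq | hgt
    · have a := (h₀.lt_iff x hx y hy hlt)
      have b := (h.lt_iff x hx y hy hlt)
      simp only [Finset.notMem_empty, not_false_eq_true, iff_true] at a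
      have c := mem_orderedPairs.2 ⟨hx, hy, hlt⟩
      simp only [c, not_true_eq_false, iff_false] at b
      omega
    · exact absurd (hinj y hy x hx heq.symm) hyx
    · have a := (h₀.lt_iff y hy x hx hgt)
      have b := (h.lt_iff y hy x hx hgt)
      simp only [Finset.notMem_empty, not_false_eq_true, iff_true] at a
      have c := mem_orderedPairs.2 ⟨hy, hx, hgt⟩
      simp only [c, not_true_eq_false, iff_false] at b
      omega
  have c1 := h.placement.card_initSeg (h.placement.lt x hx).le
  have c0 := h₀.placement.card_initSeg (k := r₀ x + 1) (h₀.placement.lt x hx)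
  have t := Finset.card_filter_add_card_filter_not (s := S) (fun y => r₀ y < r₀ x + 1)
  have e : S.filter (fun y => ¬ r₀ y < r₀ x + 1) = initSeg S r (r x) := by
    refine Finset.filter_congr fun y hy => ?_
    by_cases hyx : y = x
    · subst hyx; omega
    · have i0 := mt (h₀.placement.inj y hy x hx) hyx
      rw [hne y hy hyx]
      omega
  rw [e, c1, h.placement.card] at t
  rw [initSeg] at c0
  omega

/-- The whole sweep: after any number `j` of transpositions the matching of crossings costs at
most the number of balanced lines passed. -/
lemma exists_sweep {ε : ℝ} {R B : Finset (ℝ × ℝ)} {n : ℕ}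
    (hinj : ∀ p ∈ R ∪ B, ∀ q ∈ R ∪ B, shear ε p = shear ε q → p = q)
    (hgp : GenPos (R ∪ B)) (hd : Disjoint R B) (hR : R.card = n) (hB : B.card = n)
    {r₀ : ℝ × ℝ → ℕ} (h₀ : IsSweep ε (R ∪ B) (2 * n) ∅ r₀) (j : ℕ)
    (hj : j ≤ (orderedPairs ε (R ∪ B)).card) :
    ∃ O r, O.card = j ∧ IsSweep ε (R ∪ B) (2 * n) O r ∧
      Matched (downs n (pathSign n B R r₀) (fun z => initSeg B r₀ (2 * z)))
        (ups n (pathSign n B R r₀) (fun z => initSeg R r₀ (2 * z)))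
        (downs n (pathSign n B R r) (fun z => initSeg B r (2 * z)))
        (ups n (pathSign n B R r) (fun z => initSeg R r (2 * z))) (passedPairs B R O).card := by
  induction j with
  | zero => exact ⟨∅, r₀, rfl, h₀, (Matched.refl _ _).mono (Nat.zero_le _)⟩
  | succ j ih =>
    obtain ⟨O, r, hcard, hS, hM⟩ := ih (by omega)
    have hne : (orderedPairs ε (R ∪ B) \ O).Nonempty := by
      rw [← Finset.card_pos, Finset.card_sdiff_of_subset hS.sub]
      omega
    obtain ⟨⟨p, q⟩, hmem, hmin'⟩ := Finset.exists_min_image _ (slopeOf ε) hne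
    obtain ⟨he, heO⟩ := Finset.mem_sdiff.1 hmem
    have hmin : ∀ e ∈ orderedPairs ε (R ∪ B), e ∉ O → slopeOf ε (p, q) ≤ slopeOf ε e :=
      fun e h1 h2 => hmin' e (Finset.mem_sdiff.2 ⟨h1, h2⟩)
    obtain ⟨hp, hq, -⟩ := mem_orderedPairs.1 he
    have hadj := hS.adjacent hinj hgp he heO hmin
    refine ⟨insert (p, q) O, r ∘ Equiv.swap p q, ?_, hS.step he hmin hadj, ?_⟩
    · rw [Finset.card_insert_of_notMem heO, hcard]
    · refine (Matched.swap hS.placement hd hp hq hadj hM).mono ?_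
      split_ifs with hflip
      · exact card_passedPairs_insert hS.sub he heO hflip.1
          (hS.balanced hinj hgp hd hR hB he heO hmin hflip.1 hflip.2)
      · refine Finset.card_le_card fun e hm => ?_
        simp only [passedPairs, Finset.mem_filter, Finset.mem_insert] at hm ⊢
        tauto

end Sweep

/-- **Pach–Pinchasi.** If `|R| = |B| = n ≥ 1` and `S = R ∪ B` is in general
position, then `S` determines at least `n` balanced lines (a balanced line is
spanned by a blue and a red point and has equally many blue and red points in
each of its two open half-planes, i.e. both half-planes have weight `0`). -/
theorem at_least_n_balanced_lines (n : ℕ) (hn : 1 ≤ n)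
    (R B : Finset (ℝ × ℝ)) (hdisj : Disjoint R B)
    (hR : R.card = n) (hB : B.card = n)
    (hgp : GenPos (R ∪ B)) :
    n ≤ (balancedPairs B R 0).card := by
  obtain ⟨ε, hinj⟩ := exists_shear (R ∪ B)
  have hN : (R ∪ B).card = 2 * n := by
    rw [Finset.card_union_of_disjoint hdisj]
    omega
  have h₀ := isSweep_initial hN hinj
  obtain ⟨O, r, hcard, hS, hM⟩ := exists_sweep hinj hgp hdisj hR hB h₀ _ le_rfl
  obtain rfl : O = orderedPairs ε (R ∪ B) := Finset.eq_of_subset_of_card_le hS.sub hcard.ge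
  exact (card_le_of_reversed h₀.placement hdisj hB hR (h₀.reversed hinj hS) hM).trans
    (Finset.card_le_card (Finset.filter_subset _ _))
end

section
/- For every n ≥ 1 there exist disjoint finite sets R and B in the plane with |R| = |B| = n, with S = R ∪ B in general position, such that the number of balanced lines determined by S is exactly n. (Such a configuration is obtained by placing S at the vertices of a convex 2n-gon so that R and B are separated by a straight line.) -/
/-!
The `2n` points lie on the parabola `y = x²`, blue ones at abscissae `-1, …, -n` and red ones at
`1, …, n`; they are in convex position and the `y`-axis separates the colours.  On the parabola
the orientation determinant factors as `(b - a) (x - a) (x - b)` (`cross_par`), so it vanishes only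
when two of the points coincide.  The line through the blue point at `-(j+1)` and the red point at
`k+1` has exactly `j` blue and `k` red points below it (on the arc between its two points), and
`n-1-j` blue and `n-1-k` red points on the other side.  Hence it is balanced iff `j = k`, and the
balanced lines are the `n` horizontal ones.
-/

open scoped Classical

/-- The point of the parabola `y = x²` with abscissa `t`. -/
def par (t : ℝ) : ℝ × ℝ := (t, t ^ 2)

/-- The `i`-th red point (`i = 0, 1, …`), at abscissa `i + 1`. -/
def redPt (i : ℕ) : ℝ × ℝ := par ((i : ℝ) + 1)

/-- The `i`-th blue point (`i = 0, 1, …`), at abscissa `-(i + 1)`. -/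
def bluePt (i : ℕ) : ℝ × ℝ := par (-((i : ℝ) + 1))

lemma cross_par (a b x : ℝ) :
    cross (par a) (par b) (par x) = (b - a) * (x - a) * (x - b) := by
  simp only [cross, par]; ring

lemma redPt_injective : Function.Injective redPt := by
  intro i j h
  have := congrArg Prod.fst h
  simpa [redPt, par] using this

lemma bluePt_injective : Function.Injective bluePt := by
  intro i j h
  have := congrArg Prod.fst h
  simpa [bluePt, par] using this

lemma cross_red (j k i : ℕ) : cross (bluePt j) (redPt k) (redPt i) =
    (((k : ℝ) + j + 2) * ((i : ℝ) + j + 2)) * ((i : ℝ) - k) := by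
  rw [bluePt, redPt, redPt, cross_par]; ring

lemma cross_blue (j k i : ℕ) : cross (bluePt j) (redPt k) (bluePt i) =
    (((k : ℝ) + j + 2) * ((i : ℝ) + k + 2)) * ((i : ℝ) - j) := by
  rw [bluePt, redPt, bluePt, cross_par]; ring

lemma cross_red_pos (j k i : ℕ) : 0 < cross (bluePt j) (redPt k) (redPt i) ↔ k < i := by
  rw [cross_red, mul_pos_iff_of_pos_left (by positivity), sub_pos, Nat.cast_lt]

lemma cross_red_neg (j k i : ℕ) : cross (bluePt j) (redPt k) (redPt i) < 0 ↔ i < k := by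
  rw [cross_red, ← neg_pos, ← mul_neg,
    mul_pos_iff_of_pos_left (by positivity), neg_sub, sub_pos, Nat.cast_lt]

lemma cross_blue_pos (j k i : ℕ) : 0 < cross (bluePt j) (redPt k) (bluePt i) ↔ j < i := by
  rw [cross_blue, mul_pos_iff_of_pos_left (by positivity), sub_pos, Nat.cast_lt]

lemma cross_blue_neg (j k i : ℕ) : cross (bluePt j) (redPt k) (bluePt i) < 0 ↔ i < j := by
  rw [cross_blue, ← neg_pos, ← mul_neg,
    mul_pos_iff_of_pos_left (by positivity), neg_sub, sub_pos, Nat.cast_lt]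

lemma card_range_filter_gt (n j : ℕ) :
    ((Finset.range n).filter (fun i => j < i)).card = n - 1 - j := by
  have : (Finset.range n).filter (fun i => j < i) = Finset.Ioo j n := by
    ext i; simp [and_comm]
  rw [this, Nat.card_Ioo]; omega

lemma card_range_filter_lt {n j : ℕ} (hj : j < n) :
    ((Finset.range n).filter (fun i => i < j)).card = j := by
  have : (Finset.range n).filter (fun i => i < j) = Finset.range j := by
    ext i; simp; omega
  rw [this, Finset.card_range]

lemma balancedLine_iff {n j k : ℕ} (hj : j < n) (hk : k < n) :
    BalancedLine ((Finset.range n).image bluePt) ((Finset.range n).image redPt) 0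
      (bluePt j) (redPt k) ↔ j = k := by
  simp only [BalancedLine, wPos, wNeg, Finset.filter_image, cross_red_pos, cross_red_neg,
    cross_blue_pos, cross_blue_neg, Finset.card_image_of_injective _ redPt_injective,
    Finset.card_image_of_injective _ bluePt_injective, card_range_filter_gt,
    card_range_filter_lt hj, card_range_filter_lt hk]
  omega

/-- **Tightness of the Pach–Pinchasi bound.** For every `n ≥ 1` there are
disjoint sets `R`, `B` of `n` points each, with `R ∪ B` in general position,
determining exactly `n` balanced lines. -/
theorem exists_config_with_exactly_n_balanced_lines (n : ℕ) (hn : 1 ≤ n) :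
    ∃ R B : Finset (ℝ × ℝ), Disjoint R B ∧ R.card = n ∧ B.card = n ∧
      GenPos (R ∪ B) ∧ (balancedPairs B R 0).card = n := by
  refine ⟨(Finset.range n).image redPt, (Finset.range n).image bluePt, ?_, ?_, ?_, ?_, ?_⟩
  · rw [Finset.disjoint_left]
    intro p hp hq
    obtain ⟨i, -, rfl⟩ := Finset.mem_image.1 hp
    obtain ⟨j, -, h⟩ := Finset.mem_image.1 hq
    have h1 : -((j : ℝ) + 1) = (i : ℝ) + 1 := congrArg Prod.fst h
    have : (0 : ℝ) ≤ i := i.cast_nonneg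
    have : (0 : ℝ) ≤ j := j.cast_nonneg
    linarith
  · rw [Finset.card_image_of_injective _ redPt_injective, Finset.card_range]
  · rw [Finset.card_image_of_injective _ bluePt_injective, Finset.card_range]
  · have on_par : ∀ p ∈ (Finset.range n).image redPt ∪ (Finset.range n).image bluePt,
        ∃ t, par t = p := by
      intro p hp
      rcases Finset.mem_union.1 hp with hp | hp <;>
        obtain ⟨i, -, rfl⟩ := Finset.mem_image.1 hp
      exacts [⟨_, rfl⟩, ⟨_, rfl⟩]
    intro p hp q hq x hx hpq hpx hqx
    obtain ⟨a, rfl⟩ := on_par p hp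
    obtain ⟨b, rfl⟩ := on_par q hq
    obtain ⟨c, rfl⟩ := on_par x hx
    rw [cross_par]
    refine mul_ne_zero (mul_ne_zero ?_ ?_) ?_ <;> rw [sub_ne_zero] <;> rintro rfl <;> contradiction
  · have key : balancedPairs ((Finset.range n).image bluePt) ((Finset.range n).image redPt) 0 =
        (Finset.range n).image (fun i => (bluePt i, redPt i)) := by
      ext ⟨p, q⟩
      simp only [balancedPairs, Finset.mem_filter, Finset.mem_product, Finset.mem_image,
        Finset.mem_range, Prod.mk.injEq]
      constructor
      · rintro ⟨⟨⟨j, hj, rfl⟩, ⟨k, hk, rfl⟩⟩, h⟩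
        obtain rfl := (balancedLine_iff hj hk).1 h
        exact ⟨j, hj, rfl, rfl⟩
      · rintro ⟨i, hi, rfl, rfl⟩
        exact ⟨⟨⟨i, hi, rfl⟩, ⟨i, hi, rfl⟩⟩, (balancedLine_iff hi hi).2 rfl⟩
    rw [key, Finset.card_image_of_injective, Finset.card_range]
    intro i j h
    exact bluePt_injective (congrArg Prod.fst h)
end
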